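/- arXiv:2106.09676 — 2 statements merged into one kernel-verified Lean document; each statement's English description precedes it below -/
import Mathlib

section
/- For a conjugate-permutable subgroup H of a finite group G, h ∈ H, x ∈ G, and any i ≥ 1, the order |H ∩ H^{[x,_{i-1} h]}| divides |H ∩ H^{[x,_i h]}|. -/
open Pointwise

/-- `H` is conjugate-permutable in `G`. -/
def IsConjPermutable {G : Type*} [Group G] (H : Subgroup G) : Prop :=
  ∀ x : G, (H : Set G) * ((fun g => x⁻¹ * g * x) '' (H : Set G)) =
    ((fun g => x⁻¹ * g * x) '' (H : Set G)) * (H : Set G)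

/-- Left-normed iterated commutator. -/
def engel {G : Type*} [Group G] (x h : G) : ℕ → G
  | 0 => x
  | (i + 1) => (engel x h i)⁻¹ * h⁻¹ * (engel x h i) * h

/-- The conjugate subgroup `g⁻¹ H g`. -/
def conjSub {G : Type*} [Group G] (g : G) (H : Subgroup G) : Subgroup G :=
  H.map (MulAut.conj g⁻¹).toMonoidHom

theorem aux_sup_le {G : Type*} [Group G] (A B : Subgroup G)
    (hAB : (A : Set G) * (B : Set G) = (B : Set G) * (A : Set G)) (g : G) (hg : g ∈ A ⊔ B) :
    ∃ b ∈ B, ∃ a ∈ A, b * a = g := by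
  have swap : ∀ a ∈ A, ∀ b ∈ B, ∃ b' ∈ B, ∃ a' ∈ A, b' * a' = a * b := by
    intro a ha b hb
    have : a * b ∈ (A : Set G) * (B : Set G) := Set.mul_mem_mul ha hb
    rw [hAB] at this
    obtain ⟨b', hb', a', ha', e⟩ := Set.mem_mul.1 this
    exact ⟨b', hb', a', ha', e⟩
  let K : Subgroup G :=
    { carrier := {g | ∃ b ∈ B, ∃ a ∈ A, b * a = g}
      one_mem' := ⟨1, B.one_mem, 1, A.one_mem, by simp⟩
      mul_mem' := by
        rintro _ _ ⟨b, hb, a, ha, rfl⟩ ⟨c, hc, d, hd, rfl⟩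
        obtain ⟨b', hb', a', ha', e⟩ := swap a ha c hc
        refine ⟨b * b', B.mul_mem hb hb', a' * d, A.mul_mem ha' hd, ?_⟩
        calc b * b' * (a' * d) = b * (b' * a') * d := by group
          _ = _ := by rw [e]; group
      inv_mem' := by
        rintro _ ⟨b, hb, a, ha, rfl⟩
        obtain ⟨b', hb', a', ha', e⟩ := swap a⁻¹ (A.inv_mem ha) b⁻¹ (B.inv_mem hb)
        exact ⟨b', hb', a', ha', by rw [e]; group⟩ }
  have hK : A ⊔ B ≤ K := sup_le (fun a ha => ⟨1, B.one_mem, a, ha, by simp⟩)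
    (fun b hb => ⟨b, hb, 1, A.one_mem, by simp⟩)
  exact hK hg

theorem aux_relIndex {G : Type*} [Group G] (A B : Subgroup G)
    (hAB : (A : Set G) * (B : Set G) = (B : Set G) * (A : Set G)) :
    A.relIndex (A ⊔ B) = A.relIndex B := by
  symm
  refine Nat.card_eq_of_bijective
    (Subgroup.quotientSubgroupOfEmbeddingOfLE A (le_sup_right : B ≤ A ⊔ B)) ⟨Function.Embedding.injective _, ?_⟩
  intro q
  induction q using QuotientGroup.induction_on with
  | H z =>
    obtain ⟨z, hz⟩ := z
    obtain ⟨b, hb, a, ha, rfl⟩ := aux_sup_le A B hAB z hz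
    refine ⟨QuotientGroup.mk ⟨b, hb⟩, ?_⟩
    rw [Subgroup.quotientSubgroupOfEmbeddingOfLE_apply_mk, QuotientGroup.eq]
    simpa [Subgroup.mem_subgroupOf] using ha

theorem aux_mem {G : Type*} [Group G] (g x : G) (H : Subgroup G) :
    x ∈ conjSub g H ↔ g * x * g⁻¹ ∈ H := by
  unfold conjSub
  constructor
  · rintro ⟨y, hy, rfl⟩
    simpa [mul_assoc] using hy
  · intro hx
    exact ⟨_, hx, by simp [mul_assoc]⟩

theorem aux_card {G : Type*} [Group G] (g : G) (H : Subgroup G) :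
    Nat.card (conjSub g H) = Nat.card H :=
  (Nat.card_congr (H.equivMapOfInjective _ (MulAut.conj g⁻¹).injective).toEquiv).symm

theorem aux_coe {G : Type*} [Group G] (g : G) (H : Subgroup G) :
    (conjSub g H : Set G) = (fun x => g⁻¹ * x * g) '' (H : Set G) := by
  ext x
  simp [conjSub]

theorem aux_perm {G : Type*} [Group G] (H : Subgroup G) (hH : IsConjPermutable H) (g : G) :
    H.relIndex (H ⊔ conjSub g H) = H.relIndex (conjSub g H) := by
  apply aux_relIndex
  rw [aux_coe]
  exact hH g

theorem aux_card_inf {G : Type*} [Group G] (H : Subgroup G) (g : G) :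
    Nat.card (H ⊓ conjSub g H : Subgroup G) * H.relIndex (conjSub g H) = Nat.card H := by
  rw [← aux_card g H, ← Subgroup.inf_relIndex_right]
  have := Subgroup.relIndex_mul_relIndex ⊥ (H ⊓ conjSub g H) (conjSub g H) bot_le inf_le_right
  rwa [Subgroup.relIndex_bot_left, Subgroup.relIndex_bot_left] at this

theorem card_inter_dvd {G : Type*} [Group G] [Finite G] (H : Subgroup G)
    (hH : IsConjPermutable H) (h : G) (hh : h ∈ H) (x : G) (i : ℕ) (hi : 1 ≤ i) :
    Nat.card (H ⊓ conjSub (engel x h (i - 1)) H : Subgroup G) ∣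
      Nat.card (H ⊓ conjSub (engel x h i) H : Subgroup G) := by
  obtain ⟨i, rfl⟩ := Nat.exists_eq_add_of_le' hi
  simp only [Nat.add_sub_cancel, engel]
  generalize engel x h i = y
  set k := y⁻¹ * h⁻¹ * y with hk
  have e : H ⊓ conjSub (k * h) H = conjSub h (H ⊓ conjSub k H) := by
    ext z
    simp only [Subgroup.mem_inf, aux_mem]
    rw [Subgroup.mul_mem_cancel_right _ (H.inv_mem hh), Subgroup.mul_mem_cancel_left _ hh]
    simp [mul_assoc]
  rw [e, aux_card]
  have hky : k ∈ conjSub y H := by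
    rw [aux_mem, hk]
    simpa [mul_assoc] using hh
  have hle : H ⊔ conjSub k H ≤ H ⊔ conjSub y H := by
    refine sup_le le_sup_left fun z hz => ?_
    rw [aux_mem] at hz
    have hk' : k ∈ H ⊔ conjSub y H := (le_sup_right : conjSub y H ≤ _) hky
    have hz' : k * z * k⁻¹ ∈ H ⊔ conjSub y H := (le_sup_left : H ≤ _) hz
    rwa [Subgroup.mul_mem_cancel_right _ (inv_mem hk'), Subgroup.mul_mem_cancel_left _ hk'] at hz'
  have hd := Subgroup.relIndex_mul_relIndex H _ _ le_sup_left hle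
  rw [aux_perm H hH, aux_perm H hH] at hd
  have h1 := aux_card_inf H k
  have h2 := aux_card_inf H y
  have hpos : 0 < Nat.card H := Nat.card_pos
  have hne : 0 < H.relIndex (conjSub k H) := by
    rcases Nat.eq_zero_or_pos (H.relIndex (conjSub k H)) with h0 | h0
    · rw [h0] at h1; omega
    · exact h0
  refine ⟨(H ⊔ conjSub k H).relIndex (H ⊔ conjSub y H), ?_⟩
  apply Nat.eq_of_mul_eq_mul_right hne
  rw [h1, ← h2, ← hd]
  ring
end

section
/- The class of finite ECP-groups is not closed under direct products: there exist two finite ECP-groups H₁ and H₂ (each a product of two cyclic subgroups, of orders 27·9) such that H₁ × H₂ is not an ECP-group. -/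
open Pointwise

/-- `G` is an ECP-group: every subgroup is conjugate-permutable. -/
def IsECPGroup (G : Type*) [Group G] : Prop :=
  ∀ (H : Subgroup G) (x : G),
    (H : Set G) * ((fun g => x⁻¹ * g * x) '' (H : Set G)) =
      ((fun g => x⁻¹ * g * x) '' (H : Set G)) * (H : Set G)

/-- The group `⟨a,b | a^27 = b^9 = 1, b⁻¹ab = a^4⟩`; `⟨i, j⟩` stands for `a^i b^j`. -/
@[ext] structure MG where
  a : ZMod 27
  b : ZMod 9
  deriving DecidableEq

namespace MG

/-- The action of `b^j` on `a`. -/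
def q (j : ZMod 9) : ZMod 27 := 7 ^ j.val

lemma q_add : ∀ j l : ZMod 9, q (j + l) = q j * q l := by decide

lemma q_zero : q 0 = 1 := by decide

instance : Mul MG := ⟨fun x y => ⟨x.a + y.a * q x.b, x.b + y.b⟩⟩
instance : One MG := ⟨⟨0, 0⟩⟩
instance : Inv MG := ⟨fun x => ⟨-(x.a * q (-x.b)), -x.b⟩⟩

@[simp] lemma mul_a (x y : MG) : (x * y).a = x.a + y.a * q x.b := rfl
@[simp] lemma mul_b (x y : MG) : (x * y).b = x.b + y.b := rfl
@[simp] lemma one_a : (1 : MG).a = 0 := rfl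
@[simp] lemma one_b : (1 : MG).b = 0 := rfl
@[simp] lemma inv_a (x : MG) : (x⁻¹).a = -(x.a * q (-x.b)) := rfl
@[simp] lemma inv_b (x : MG) : (x⁻¹).b = -x.b := rfl

instance : Group MG := Group.ofLeftAxioms
  (by intro x y z; ext
      · simp only [mul_a, mul_b, q_add]; ring
      · simp only [mul_b]; ring)
  (by intro x; ext <;> simp [q_zero])
  (by intro x; ext <;> simp)

instance : Finite MG :=
  Finite.of_injective (fun x : MG => (x.a, x.b)) (by
    intro x y h
    simp only [Prod.mk.injEq] at h
    exact MG.ext h.1 h.2)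

lemma pow_b (x : MG) (n : ℕ) : (x ^ n).b = n * x.b := by
  induction n with
  | zero => simp
  | succ n ih => rw [pow_succ, mul_b, ih]; push_cast; ring

/-- The element `a^k`. -/
def A (k : ZMod 27) : MG := ⟨k, 0⟩

lemma A_mul (k l : ZMod 27) : A k * A l = A (k + l) := by
  ext <;> simp [A, q_zero]

lemma mul_A (z : MG) (k : ZMod 27) : z * A k = A (k * q z.b) * z := by
  ext <;> simp [A, q_zero]; ring

lemma A_mul_pow (k : ZMod 27) (z : MG) (m : ℕ) :
    (A k * z) ^ m = A (k * ∑ i ∈ Finset.range m, (q z.b) ^ i) * z ^ m := by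
  induction m with
  | zero => ext <;> simp [A]
  | succ m ih =>
    rw [pow_succ', ih, Finset.sum_range_succ', pow_succ', mul_assoc (A k), ← mul_assoc z, mul_A,
      mul_assoc, ← mul_assoc (A k), A_mul]
    congr 2
    simp only [pow_succ, ← Finset.sum_mul, pow_zero]
    ring

lemma exists_geom : ∀ j l : ZMod 9, ∃ m : Fin 27,
    (List.range m).foldl (fun s _ => 1 + q j * s) 0 = q l := by
  decide +kernel

lemma foldl_geom (w : ZMod 27) (m : ℕ) :
    (List.range m).foldl (fun s _ => 1 + w * s) 0 = ∑ i ∈ Finset.range m, w ^ i := by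
  induction m with
  | zero => simp
  | succ m ih =>
    rw [List.range_succ, List.foldl_append, ih, Finset.sum_range_succ']
    simp only [List.foldl_cons, List.foldl_nil, pow_succ', ← Finset.mul_sum, pow_zero]
    ring

/-- `x` and `y` permute when `y` is, modulo `⟨a⟩`, a power of `x`. -/
lemma permute_aux (x y : MG) (c : ℕ) (h : y.b = c * x.b) :
    ∃ m n : ℤ, x * y = y ^ m * x ^ n := by
  obtain ⟨k, hk⟩ : ∃ k, y = A k * x ^ c := by
    refine ⟨(y * (x ^ c)⁻¹).a, ?_⟩
    rw [← mul_inv_eq_iff_eq_mul]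
    ext
    · rfl
    · simp [A, pow_b, h]
  obtain ⟨m, hm⟩ := exists_geom ((x ^ c).b) x.b
  rw [foldl_geom] at hm
  refine ⟨(m : ℕ), (c : ℤ) + 1 - c * (m : ℕ), ?_⟩
  rw [zpow_natCast, hk, A_mul_pow, hm, ← mul_assoc, mul_A, mul_assoc, mul_assoc]
  congr 1
  rw [← pow_mul, ← pow_succ', ← zpow_natCast, ← zpow_natCast, ← zpow_add]
  congr 1
  push_cast
  ring

lemma dvd_total : ∀ j l : ZMod 9, (∃ c : Fin 9, l = ((c : ℕ) : ZMod 9) * j) ∨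
    (∃ c : Fin 9, j = ((c : ℕ) : ZMod 9) * l) := by
  decide +kernel

lemma permute (x y : MG) : ∃ m n : ℤ, x * y = y ^ m * x ^ n := by
  rcases dvd_total x.b y.b with ⟨c, hc⟩ | ⟨c, hc⟩
  · exact permute_aux x y c hc
  · obtain ⟨m, n, h⟩ := permute_aux y⁻¹ x⁻¹ c (by simp [hc])
    refine ⟨n, m, ?_⟩
    have := congrArg (·⁻¹) h
    simpa [mul_inv_rev] using this

lemma mul_subset (H K : Subgroup MG) : (H : Set MG) * (K : Set MG) ⊆ (K : Set MG) * H := by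
  rintro _ ⟨x, hx, y, hy, rfl⟩
  obtain ⟨m, n, h⟩ := permute x y
  exact ⟨y ^ m, K.zpow_mem hy m, x ^ n, H.zpow_mem hx n, h.symm⟩

lemma isECP : IsECPGroup MG := by
  intro H x
  have : ((fun g => x⁻¹ * g * x) '' (H : Set MG)) =
      ((H.map (MulAut.conj x⁻¹).toMonoidHom : Subgroup MG) : Set MG) := by
    ext g
    simp
  rw [this]
  exact (mul_subset _ _).antisymm (mul_subset _ _)

lemma order_a : orderOf (⟨1, 0⟩ : MG) = 27 :=
  orderOf_eq_prime_pow (p := 3) (n := 2) (by decide +kernel) (by decide +kernel)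

lemma order_b : orderOf (⟨0, 1⟩ : MG) = 9 :=
  orderOf_eq_prime_pow (p := 3) (n := 1) (by decide +kernel) (by decide +kernel)

lemma pow_a_eq : ∀ i : ZMod 27, (⟨1, 0⟩ : MG) ^ i.val = ⟨i, 0⟩ := by decide +kernel
lemma pow_b_eq : ∀ j : ZMod 9, (⟨0, 1⟩ : MG) ^ j.val = ⟨0, j⟩ := by decide +kernel

lemma gen : ∃ a b : MG, Nat.card (Subgroup.zpowers a) = 27 ∧
    Nat.card (Subgroup.zpowers b) = 9 ∧
    ((Subgroup.zpowers a : Subgroup MG) : Set MG) *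
      ((Subgroup.zpowers b : Subgroup MG) : Set MG) = Set.univ := by
  refine ⟨⟨1, 0⟩, ⟨0, 1⟩, ?_, ?_, ?_⟩
  · rw [Nat.card_zpowers, order_a]
  · rw [Nat.card_zpowers, order_b]
  · refine Set.eq_univ_of_forall fun g => ?_
    refine ⟨⟨g.a, 0⟩, ?_, ⟨0, g.b⟩, ?_, ?_⟩
    · exact pow_a_eq g.a ▸ Subgroup.npow_mem_zpowers (⟨1, 0⟩ : MG) g.a.val
    · exact pow_b_eq g.b ▸ Subgroup.npow_mem_zpowers (⟨0, 1⟩ : MG) g.b.val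
    · ext <;> simp

/-- Generator of a cyclic subgroup of order 9 that does not permute with a conjugate. -/
def u : MG × MG := (⟨0, 1⟩, ⟨12, 2⟩)

/-- The conjugating element. -/
def t : MG × MG := (⟨14, 2⟩, ⟨17, 5⟩)

lemma u_pow : u ^ 9 = 1 := by decide +kernel

lemma mem_u {g : MG × MG} (hg : g ∈ Subgroup.zpowers u) : ∃ i : Fin 9, u ^ (i : ℕ) = g := by
  obtain ⟨n, rfl⟩ := mem_powers_iff_mem_zpowers.2 hg
  exact ⟨⟨n % 9, Nat.mod_lt _ (by norm_num)⟩, (pow_eq_pow_mod n u_pow).symm⟩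

lemma key : ∃ k l : Fin 9, ∀ i j : Fin 9,
    u ^ (i : ℕ) * (t⁻¹ * u ^ (j : ℕ) * t) ≠ (t⁻¹ * u ^ (k : ℕ) * t) * u ^ (l : ℕ) := by
  decide +kernel

lemma not_isECP : ¬ IsECPGroup (MG × MG) := by
  intro h
  obtain ⟨k, l, hkl⟩ := key
  have hm : (t⁻¹ * u ^ (k : ℕ) * t) * u ^ (l : ℕ) ∈
      ((fun g => t⁻¹ * g * t) '' (Subgroup.zpowers u : Set (MG × MG))) *
        (Subgroup.zpowers u : Set (MG × MG)) :=
    ⟨_, ⟨_, Subgroup.npow_mem_zpowers u k, rfl⟩, _, Subgroup.npow_mem_zpowers u l, rfl⟩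
  rw [← h] at hm
  obtain ⟨_, hx, _, ⟨_, hy, rfl⟩, hxy⟩ := hm
  obtain ⟨i, rfl⟩ := mem_u hx
  obtain ⟨j, rfl⟩ := mem_u hy
  exact hkl i j hxy

end MG

theorem ECP_not_closed_under_direct_products :
    ∃ (G₁ : Type) (i₁ : Group G₁) (G₂ : Type) (i₂ : Group G₂),
      Finite G₁ ∧ Finite G₂ ∧
      @IsECPGroup G₁ i₁ ∧ @IsECPGroup G₂ i₂ ∧
      -- each `Gᵢ` is a product of two cyclic subgroups of orders 27 and 9
      (∃ a b : G₁, Nat.card (@Subgroup.zpowers G₁ i₁ a) = 27 ∧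
        Nat.card (@Subgroup.zpowers G₁ i₁ b) = 9 ∧
        ((@Subgroup.zpowers G₁ i₁ a : Subgroup G₁) : Set G₁) *
          ((@Subgroup.zpowers G₁ i₁ b : Subgroup G₁) : Set G₁) = Set.univ) ∧
      (∃ a b : G₂, Nat.card (@Subgroup.zpowers G₂ i₂ a) = 27 ∧
        Nat.card (@Subgroup.zpowers G₂ i₂ b) = 9 ∧
        ((@Subgroup.zpowers G₂ i₂ a : Subgroup G₂) : Set G₂) *
          ((@Subgroup.zpowers G₂ i₂ b : Subgroup G₂) : Set G₂) = Set.univ) ∧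
      ¬ @IsECPGroup (G₁ × G₂) (@Prod.instGroup G₁ G₂ i₁ i₂) := by
  exact ⟨MG, inferInstance, MG, inferInstance, inferInstance, inferInstance, MG.isECP, MG.isECP,
    MG.gen, MG.gen, MG.not_isECP⟩
end
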